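/- Let M be any popular max-matching in G. Then there exists a stable matching S in G* such that S' = M. -/

import Mathlib

open Classical

noncomputable section

namespace PopMax

/-- A bipartite preference instance `G = (A ∪ B, E)`:
`E a b` says there is an edge between `a ∈ A` and `b ∈ B`;
`prefA a b b'` says `a` strictly prefers `b` to `b'`;
`prefB b a a'` says `b` strictly prefers `a` to `a'`. -/
structure PrefSys (A : Type*) (B : Type*) where
  E : A → B → Prop
  prefA : A → B → B → Prop
  prefB : B → A → A → Prop

/-- Every node has a strict (linear) preference order over its neighbors. -/
def PrefSys.IsValid {A B : Type*} (I : PrefSys A B) : Prop :=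
  (∀ a b, ¬ I.prefA a b b) ∧
  (∀ a b₁ b₂ b₃, I.prefA a b₁ b₂ → I.prefA a b₂ b₃ → I.prefA a b₁ b₃) ∧
  (∀ a b₁ b₂, I.E a b₁ → I.E a b₂ → b₁ ≠ b₂ → I.prefA a b₁ b₂ ∨ I.prefA a b₂ b₁) ∧
  (∀ b a, ¬ I.prefB b a a) ∧
  (∀ b a₁ a₂ a₃, I.prefB b a₁ a₂ → I.prefB b a₂ a₃ → I.prefB b a₁ a₃) ∧
  (∀ b a₁ a₂, I.E a₁ b → I.E a₂ b → a₁ ≠ a₂ → I.prefB b a₁ a₂ ∨ I.prefB b a₂ a₁)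

variable {A B : Type*}

/-- A matching: a set of pairwise disjoint edges. -/
def IsMatching (I : PrefSys A B) (M : Finset (A × B)) : Prop :=
  (∀ p ∈ M, I.E p.1 p.2) ∧
  (∀ p ∈ M, ∀ q ∈ M, p.1 = q.1 → p = q) ∧
  (∀ p ∈ M, ∀ q ∈ M, p.2 = q.2 → p = q)

def matchedA (M : Finset (A × B)) (a : A) : Prop := ∃ b, (a, b) ∈ M
def matchedB (M : Finset (A × B)) (b : B) : Prop := ∃ a, (a, b) ∈ M

/-- A maximum matching: a matching of maximum cardinality. -/
def IsMaximumMatching (I : PrefSys A B) (M : Finset (A × B)) : Prop :=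
  IsMatching I M ∧ ∀ N : Finset (A × B), IsMatching I N → N.card ≤ M.card

/-- A perfect matching matches all nodes. -/
def IsPerfectMatching (I : PrefSys A B) (M : Finset (A × B)) : Prop :=
  IsMatching I M ∧ (∀ a, matchedA M a) ∧ (∀ b, matchedB M b)

/-- `a ∈ A` prefers matching `M` to matching `N`. -/
def prefersA (I : PrefSys A B) (a : A) (M N : Finset (A × B)) : Prop :=
  ∃ b, (a, b) ∈ M ∧ (¬ matchedA N a ∨ ∃ b', (a, b') ∈ N ∧ I.prefA a b b')

/-- `b ∈ B` prefers matching `M` to matching `N`. -/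
def prefersB (I : PrefSys A B) (b : B) (M N : Finset (A × B)) : Prop :=
  ∃ a, (a, b) ∈ M ∧ (¬ matchedB N b ∨ ∃ a', (a', b) ∈ N ∧ I.prefB b a a')

/-- A node `u ∈ A ∪ B` prefers matching `M` to matching `N`. -/
def prefers (I : PrefSys A B) (u : A ⊕ B) (M N : Finset (A × B)) : Prop :=
  match u with
  | Sum.inl a => prefersA I a M N
  | Sum.inr b => prefersB I b M N

/-- `φ(M,N)`: the number of nodes preferring `M` to `N`. -/
def phi [Fintype A] [Fintype B] (I : PrefSys A B) (M N : Finset (A × B)) : ℕ :=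
  (Finset.univ.filter (fun u : A ⊕ B => prefers I u M N)).card

/-- `Δ(M,N) = φ(M,N) − φ(N,M)`. -/
def Delta [Fintype A] [Fintype B] (I : PrefSys A B) (M N : Finset (A × B)) : ℤ :=
  (phi I M N : ℤ) - (phi I N M : ℤ)

/-- A popular max-matching: a maximum matching `M` with `Δ(M,N) ≥ 0`
for every maximum matching `N`. -/
def IsPopularMaxMatching [Fintype A] [Fintype B] (I : PrefSys A B)
    (M : Finset (A × B)) : Prop :=
  IsMaximumMatching I M ∧
    ∀ N : Finset (A × B), IsMaximumMatching I N → 0 ≤ Delta I M N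

/-- The edge `(a,b) ∉ M` blocks `M`. -/
def Blocks (I : PrefSys A B) (M : Finset (A × B)) (a : A) (b : B) : Prop :=
  I.E a b ∧ (a, b) ∉ M ∧
  (¬ matchedA M a ∨ ∃ b', (a, b') ∈ M ∧ I.prefA a b b') ∧
  (¬ matchedB M b ∨ ∃ a', (a', b) ∈ M ∧ I.prefB b a a')

/-- A stable matching: a matching with no blocking edge. -/
def IsStable (I : PrefSys A B) (S : Finset (A × B)) : Prop :=
  IsMatching I S ∧ ∀ a b, ¬ Blocks I S a b

/-- The edge weight `wt_M(a,b) ∈ {0, ±2}`. -/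
def wt (I : PrefSys A B) (M : Finset (A × B)) (a : A) (b : B) : ℤ :=
  if Blocks I M a b then 2
  else if (∃ b', (a, b') ∈ M ∧ I.prefA a b' b) ∧ (∃ a', (a', b) ∈ M ∧ I.prefB b a' a) then -2
  else 0

/-- The underlying simple graph on the node set `A ⊕ B`. -/
def graphOf (I : PrefSys A B) : SimpleGraph (A ⊕ B) :=
  SimpleGraph.fromRel (fun u w =>
    match u, w with
    | Sum.inl a, Sum.inr b => I.E a b
    | _, _ => False)

/-- The (undirected) edge `e` is an edge of the matching `M`. -/
def edgeInM (M : Finset (A × B)) (e : Sym2 (A ⊕ B)) : Prop :=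
  ∃ a b, (a, b) ∈ M ∧ e = s(Sum.inl a, Sum.inr b)

/-- Consecutive edges alternate between `M` and `E ∖ M`. -/
def altRel (M : Finset (A × B)) (e f : Sym2 (A ⊕ B)) : Prop :=
  edgeInM M e ↔ ¬ edgeInM M f

/-- An alternating path with respect to `M`. -/
def IsAltPath (I : PrefSys A B) (M : Finset (A × B)) {u w : A ⊕ B}
    (p : (graphOf I).Walk u w) : Prop :=
  p.IsPath ∧ List.Chain' (altRel M) p.edges

/-- An alternating cycle with respect to `M` (alternation also across the wrap-around). -/
def IsAltCycle (I : PrefSys A B) (M : Finset (A × B)) {w : A ⊕ B}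
    (c : (graphOf I).Walk w w) : Prop :=
  c.IsCycle ∧ List.Chain' (altRel M) (c.edges ++ c.edges.take 1)

/-- `wt_M` as a function on undirected edges. -/
def wtSym (I : PrefSys A B) (M : Finset (A × B)) : Sym2 (A ⊕ B) → ℤ :=
  Sym2.lift ⟨fun u w =>
      match u, w with
      | Sum.inl a, Sum.inr b => wt I M a b
      | Sum.inr b, Sum.inl a => wt I M a b
      | _, _ => 0,
    by rintro (a | b) (a' | b') <;> rfl⟩

/-- `wt_M(ρ) = Σ_{e ∈ ρ} wt_M(e)` for a walk `ρ`. -/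
def wtWalk (I : PrefSys A B) (M : Finset (A × B)) {u w : A ⊕ B}
    (p : (graphOf I).Walk u w) : ℤ :=
  (p.edges.map (wtSym I M)).sum

/-- The node `u ∈ A ∪ B` is unmatched in `M`. -/
def unmatchedNode (M : Finset (A × B)) : A ⊕ B → Prop
  | Sum.inl a => ¬ matchedA M a
  | Sum.inr b => ¬ matchedB M b

/-- The set of edges `(a,b) ∈ A × B` used by the walk `p`. -/
def pairsOf [Fintype A] [Fintype B] (I : PrefSys A B) {u w : A ⊕ B}
    (p : (graphOf I).Walk u w) : Finset (A × B) :=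
  Finset.univ.filter (fun ab : A × B => s(Sum.inl ab.1, Sum.inr ab.2) ∈ p.edges)

/-- `M` is Pareto-optimal: no matching `N` has `φ(N,M) > 0` and `φ(M,N) = 0`. -/
def IsParetoOptimal [Fintype A] [Fintype B] (I : PrefSys A B) (M : Finset (A × B)) : Prop :=
  ¬ ∃ N : Finset (A × B), IsMatching I N ∧ 0 < phi I N M ∧ phi I M N = 0

/-! ### The auxiliary instance `G*` -/

/-- `A* = {a_0, …, a_{n0−1} : a ∈ A}` where `n0 = |A|`. -/
abbrev AStar (A : Type*) [Fintype A] : Type _ := A × Fin (Fintype.card A)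

/-- `B* = B̃ ∪ {d_1(a), …, d_{n0−1}(a) : a ∈ A}`; the dummy node `(a, j)`
(with `j : Fin (n0 − 1)`) stands for `d_{j+1}(a)`. -/
abbrev BStar (A : Type*) (B : Type*) [Fintype A] : Type _ :=
  B ⊕ (A × Fin (Fintype.card A - 1))

/-- The auxiliary instance `G*` with its edges and preferences. -/
def starSys [Fintype A] (I : PrefSys A B) : PrefSys (AStar A) (BStar A B) where
  E := fun ai w =>
    match ai, w with
    | (a, _i), Sum.inl b => I.E a b
    | (a, i), Sum.inr (a', j) => a = a' ∧ ((i : ℕ) = (j : ℕ) ∨ (i : ℕ) = (j : ℕ) + 1)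
  prefA := fun ai u v =>
    match ai, u, v with
    | (a, _i), Sum.inl b, Sum.inl b' => I.prefA a b b'
    | (a, i), Sum.inl _b, Sum.inr (a', j) => a = a' ∧ (j : ℕ) = (i : ℕ)
    | (a, i), Sum.inr (a', j), Sum.inl _b => a = a' ∧ (j : ℕ) + 1 = (i : ℕ)
    | (a, i), Sum.inr (a', j), Sum.inr (a'', j') =>
        a = a' ∧ a = a'' ∧ (j : ℕ) + 1 = (i : ℕ) ∧ (j' : ℕ) = (i : ℕ)
  prefB := fun w x y =>
    match w, x, y with
    | Sum.inl b, (a, i), (a', i') =>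
        (i' : ℕ) < (i : ℕ) ∨ ((i : ℕ) = (i' : ℕ) ∧ I.prefB b a a')
    | Sum.inr (a, j), (a', i), (a'', i') =>
        a' = a ∧ a'' = a ∧ (i : ℕ) = (j : ℕ) ∧ (i' : ℕ) = (j : ℕ) + 1

/-- The projection `S ↦ S'`: delete edges incident to dummy nodes and replace
`(a_i, b̃)` by `(a, b)`. -/
def proj [Fintype A] [Fintype B] (S : Finset (AStar A × BStar A B)) : Finset (A × B) :=
  Finset.univ.filter (fun ab : A × B =>
    ∃ i : Fin (Fintype.card A), ((ab.1, i), (Sum.inl ab.2 : BStar A B)) ∈ S)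

/-- `a ∈ A_i` for the level partition of `A` induced by a (stable) matching `S` in `G*`:
for `i ≤ n0 − 2`, `a ∈ A_i` iff `(a_i, b̃) ∈ S` for some `b̃ ∈ B̃`;
`A_{n0−1}` consists of all remaining nodes of `A`. -/
def AtLevelA [Fintype A] (S : Finset (AStar A × BStar A B)) (a : A) (i : ℕ) : Prop :=
  (i + 1 < Fintype.card A ∧
     ∃ j : Fin (Fintype.card A), (j : ℕ) = i ∧
       ∃ b : B, ((a, j), (Sum.inl b : BStar A B)) ∈ S) ∨
  (i + 1 = Fintype.card A ∧
     ∀ j : Fin (Fintype.card A), (j : ℕ) + 1 < Fintype.card A →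
       ∀ b : B, ((a, j), (Sum.inl b : BStar A B)) ∉ S)

/-- `b ∈ B_i` for the level partition of `B` induced by a (stable) matching `S` in `G*`:
for `1 ≤ i ≤ n0 − 1`, `b ∈ B_i` iff `(a_i, b̃) ∈ S` for some `a ∈ A_i`;
`B_0` consists of all remaining nodes of `B`. -/
def AtLevelB [Fintype A] (S : Finset (AStar A × BStar A B)) (b : B) (i : ℕ) : Prop :=
  (1 ≤ i ∧ i < Fintype.card A ∧
     ∃ j : Fin (Fintype.card A), (j : ℕ) = i ∧
       ∃ a : A, AtLevelA S a i ∧ ((a, j), (Sum.inl b : BStar A B)) ∈ S) ∨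
  (i = 0 ∧ ∀ j : Fin (Fintype.card A), 1 ≤ (j : ℕ) →
       ∀ a : A, AtLevelA S a (j : ℕ) → ((a, j), (Sum.inl b : BStar A B)) ∉ S)

/-!
Give every node of `B` that `M` leaves unmatched a phantom partner, so that every node of `B` has an
owner. A permutation of the owners that only moves along edges of `G` reassigns the nodes of `B` and
yields a maximum matching `N`, and the votes cast by the owners and their new nodes add up to
`-Δ(M, N)`. Popularity of `M` therefore says that the digraph on the owners, weighted by votes,
has no cycle of positive weight, so that heaviest simple paths define an integer potential on it.

A simple path has weight at most `2 n0`. Since `M` is maximum, no path leads from an unmatched node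
of `A` to a phantom, so a bonus of `2 n0 - 2` for ending in a phantom makes the potential large on
phantoms while it stays small on unmatched nodes of `A`. Half of the potential, subtracted from
`n0 - 1`, is then the subscript `i` for which the copy `a_i` is matched to `M(a)` in `G*`: two votes
in favour of an edge change the subscript by at least one, which rules out blocking edges.
-/

section Paths

variable {V : Type*} {R : V → V → Prop} {w : V → V → ℤ}

/-- The total weight of the arcs between consecutive vertices of `l`, for the arc weights `w`. -/
def pathWeight (w : V → V → ℤ) (l : List V) : ℤ :=
  (l.zipWith w l.tail).sum

theorem pathWeight_singleton (x : V) : pathWeight w [x] = 0 :=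
  rfl

theorem pathWeight_cons_cons (x y : V) (l : List V) :
    pathWeight w (x :: y :: l) = w x y + pathWeight w (y :: l) := by
  simp [pathWeight]

theorem pathWeight_append_cons (l₁ : List V) (x : V) (l₂ : List V) :
    pathWeight w (l₁ ++ x :: l₂) = pathWeight w (l₁ ++ [x]) + pathWeight w (x :: l₂) := by
  induction l₁ with
  | nil => simp [pathWeight_singleton]
  | cons y l₁ ih =>
    cases l₁ with
    | nil => simp [pathWeight_cons_cons, pathWeight_singleton]
    | cons z l₁ =>
      simp only [List.cons_append, pathWeight_cons_cons] at ih ⊢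
      rw [ih, add_assoc]

theorem pathWeight_concat {l : List V} (hl : l ≠ []) (y : V) :
    pathWeight w (l ++ [y]) = pathWeight w l + w (l.getLast hl) y := by
  conv_lhs => rw [← List.dropLast_append_getLast hl, List.append_assoc, List.singleton_append,
    pathWeight_append_cons, List.dropLast_append_getLast hl]
  rw [pathWeight_cons_cons, pathWeight_singleton, add_zero]

theorem pathWeight_add_getLast_le {g : V → ℤ} (hg : ∀ x y, w x y ≤ g x) (x : V) (l : List V) :
    pathWeight w (x :: l) + g ((x :: l).getLast (List.cons_ne_nil x l)) ≤
      ((x :: l).map g).sum := by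
  induction l generalizing x with
  | nil => simp [pathWeight_singleton]
  | cons y l ih =>
    rw [pathWeight_cons_cons, List.map_cons, List.sum_cons,
      List.getLast_cons (List.cons_ne_nil y l)]
    linarith [hg x y, ih y]

theorem map_formPerm_eq_rotate_one [DecidableEq V] {l : List V} (hl : l.Nodup) :
    l.map l.formPerm = l.rotate 1 :=
  List.ext_getElem (by simp) fun i _ _ => by
    rw [List.getElem_map, List.formPerm_apply_getElem _ hl, List.getElem_rotate]

theorem map_formPerm_cons [DecidableEq V] {x : V} {l : List V} (hl : (x :: l).Nodup) :
    (x :: l).map (x :: l).formPerm = l ++ [x] := by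
  simpa using map_formPerm_eq_rotate_one hl

theorem rel_formPerm_of_isChain [DecidableEq V] (hR : ∀ x, R x x) {x : V} {l : List V}
    (hl : (x :: l).Nodup) (hc : (x :: l ++ [x]).IsChain R) (y : V) : R y ((x :: l).formPerm y) := by
  by_cases hy : y ∈ x :: l
  · have hforall : List.Forall₂ R (x :: l) (l ++ [x]) := by
      simpa using List.isChain_cons_iff_forall₂.1 hc
    rw [← map_formPerm_cons hl, List.forall₂_map_right_iff] at hforall
    exact List.forall₂_same.1 hforall y hy
  · rw [List.formPerm_apply_of_notMem hy]
    exact hR y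

theorem pathWeight_cycle_eq_sum_formPerm [Fintype V] [DecidableEq V] (hw : ∀ x, w x x = 0)
    {x : V} {l : List V} (hl : (x :: l).Nodup) :
    pathWeight w (x :: l ++ [x]) = ∑ y, w y ((x :: l).formPerm y) := by
  calc pathWeight w (x :: l ++ [x])
      = (List.zipWith w (x :: l ++ [x]) (l ++ [x] ++ [])).sum := by simp [pathWeight]
    _ = (List.zipWith w (x :: l) (l ++ [x])).sum := by
        rw [List.zipWith_append (by simp), List.zipWith_nil_right, List.append_nil]
    _ = ((x :: l).map fun y => w y ((x :: l).formPerm y)).sum := by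
        rw [← map_formPerm_cons hl, List.zipWith_map_right, List.zipWith_self]
    _ = ∑ y ∈ (x :: l).toFinset, w y ((x :: l).formPerm y) := (List.sum_toFinset _ hl).symm
    _ = ∑ y, w y ((x :: l).formPerm y) :=
        Finset.sum_subset (Finset.subset_univ _) fun y _ hy => by
          rw [List.formPerm_apply_of_notMem (by simpa using hy), hw]

/-- The value of the path `x :: l`: its weight plus the bonus `t` of its last vertex. -/
def pathValue (w : V → V → ℤ) (t : V → ℤ) (x : V) (l : List V) : ℤ :=
  pathWeight w (x :: l) + t ((x :: l).getLast (List.cons_ne_nil x l))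

theorem pathValue_append_cons (t : V → ℤ) (x : V) (l₁ : List V) (y : V) (l₂ : List V) :
    pathValue w t x (l₁ ++ y :: l₂) = pathWeight w (x :: l₁ ++ [y]) + pathValue w t y l₂ := by
  have hlast : (x :: (l₁ ++ y :: l₂)).getLast (List.cons_ne_nil x _) =
      (y :: l₂).getLast (List.cons_ne_nil y l₂) := by simp
  rw [pathValue, pathValue, hlast, ← List.cons_append, pathWeight_append_cons, add_assoc]

/-- A simple directed path of the digraph with arc relation `R`, given by its vertices. -/
def IsSimplePath (R : V → V → Prop) (l : List V) : Prop :=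
  l.Nodup ∧ l.IsChain R

theorem isSimplePath_singleton (x : V) : IsSimplePath R [x] :=
  ⟨List.nodup_singleton x, List.isChain_singleton x⟩

theorem IsSimplePath.isChain_concat {x y : V} {l : List V} (hl : IsSimplePath R (x :: l))
    (hy : R ((x :: l).getLast (List.cons_ne_nil x l)) y) : (x :: l ++ [y]).IsChain R := by
  refine List.isChain_append.2 ⟨hl.2, List.isChain_singleton y, ?_⟩
  rintro z hz _ ⟨⟩
  rw [List.getLast?_eq_some_getLast (List.cons_ne_nil x l)] at hz
  cases hz
  exact hy

theorem exists_pathValue_max [Finite V] (R : V → V → Prop) (w : V → V → ℤ) (t : V → ℤ) (x : V) :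
    ∃ l, IsSimplePath R (x :: l) ∧
      ∀ l', IsSimplePath R (x :: l') → pathValue w t x l' ≤ pathValue w t x l := by
  have : Fintype V := Fintype.ofFinite V
  have hnodup : {l : List V | l.Nodup}.Finite := Finite.of_fintype {l : List V // l.Nodup}
  have hfinite : {l | IsSimplePath R (x :: l)}.Finite :=
    hnodup.subset fun l hl => hl.1.of_cons
  exact Set.exists_max_image _ (pathValue w t x) hfinite ⟨[], isSimplePath_singleton x⟩

-- If `x` lies on the path from `y`, the new arc closes a cycle, which can be cut off.
theorem exists_pathValue_ge_of_rel
    (hcycle : ∀ x l, (x :: l).Nodup → (x :: l ++ [x]).IsChain R →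
      pathWeight w (x :: l ++ [x]) ≤ 0)
    (t : V → ℤ) {x y : V} (hxy : R x y) {l : List V} (hl : IsSimplePath R (y :: l)) :
    ∃ l', IsSimplePath R (x :: l') ∧ w x y + pathValue w t y l ≤ pathValue w t x l' := by
  have hvalue : pathValue w t x (y :: l) = w x y + pathValue w t y l := by
    simpa [pathWeight_cons_cons, pathWeight_singleton] using pathValue_append_cons t x [] y l
  have hchain : (x :: y :: l).IsChain R := hl.2.cons_cons hxy
  rw [← hvalue]
  by_cases hx : x ∈ y :: l
  · obtain ⟨l₁, l₂, hsplit⟩ := List.append_of_mem hx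
    have hnodup : (l₁ ++ x :: l₂).Nodup := hsplit ▸ hl.1
    rw [hsplit] at hchain ⊢
    have hnodup₁ : (x :: l₁).Nodup := (List.nodup_middle.1 hnodup).of_append_left (l₁ := x :: l₁)
    have hchain₁ : (x :: l₁ ++ [x]).IsChain R :=
      List.IsChain.left_of_append (l₂ := l₂) (by simpa using hchain)
    have hchain₂ : (x :: l₂).IsChain R := List.IsChain.right_of_append (l₁ := x :: l₁) hchain
    refine ⟨l₂, ⟨hnodup.of_append_right, hchain₂⟩, ?_⟩
    rw [pathValue_append_cons]
    linarith [hcycle x l₁ hnodup₁ hchain₁]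
  · exact ⟨y :: l, ⟨List.nodup_cons.2 ⟨hx, hl.1⟩, hchain⟩, le_rfl⟩

theorem exists_potential [Finite V]
    (hcycle : ∀ x l, (x :: l).Nodup → (x :: l ++ [x]).IsChain R →
      pathWeight w (x :: l ++ [x]) ≤ 0)
    (t : V → ℤ) :
    ∃ m : V → ℤ, (∀ x, t x ≤ m x) ∧ (∀ x y, R x y → w x y + m y ≤ m x) ∧
      ∀ x, ∃ l, IsSimplePath R (x :: l) ∧ m x = pathValue w t x l := by
  choose best best_isPath le_best using exists_pathValue_max R w t
  refine ⟨fun x => pathValue w t x (best x), fun x => ?_, fun x y hxy => ?_,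
    fun x => ⟨best x, best_isPath x, rfl⟩⟩
  · simpa [pathValue, pathWeight_singleton] using le_best x [] (isSimplePath_singleton x)
  · obtain ⟨l, hl, hle⟩ := exists_pathValue_ge_of_rel hcycle t hxy (best_isPath y)
    exact hle.trans (le_best x l hl)

end Paths

section Votes

variable {X : Type*} {r : X → X → Prop} {P Q : X → Prop} {x : X}

/-- A node with preference relation `r` and set of partners `P` would rather have partner `x`:
it has no partner, or prefers `x` to one. -/
def Improves (r : X → X → Prop) (P : X → Prop) (x : X) : Prop :=
  (¬ ∃ y, P y) ∨ ∃ y, P y ∧ r x y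

/-- The vote of a node with preference relation `r` when offered the partners `Q` in place of the
partners `P`: `1` for accepting, `-1` for refusing and `0` for abstaining. -/
def vote (r : X → X → Prop) (P Q : X → Prop) : ℤ :=
  (if ∃ x, Q x ∧ Improves r P x then 1 else 0) - (if ∃ x, P x ∧ Improves r Q x then 1 else 0)

theorem vote_self (r : X → X → Prop) (P : X → Prop) : vote r P P = 0 :=
  sub_self _

theorem neg_one_le_vote (r : X → X → Prop) (P Q : X → Prop) : -1 ≤ vote r P Q := by
  unfold vote; split_ifs <;> norm_num

theorem vote_le_one (r : X → X → Prop) (P Q : X → Prop) : vote r P Q ≤ 1 := by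
  unfold vote; split_ifs <;> norm_num

theorem vote_nonpos_of_forall_not (hQ : ∀ x, ¬ Q x) : vote r P Q ≤ 0 := by
  rw [vote, if_neg fun ⟨x, hx, _⟩ => hQ x hx]
  split_ifs <;> norm_num

theorem vote_eq_one_of_improves [Std.Asymm r] (hP : ∀ y z, P y → P z → y = z)
    (hx : Improves r P x) : vote r P (· = x) = 1 := by
  have hrefuse : ¬ ∃ y, P y ∧ Improves r (· = x) y := by
    rintro ⟨y, hy, hnone | ⟨_, rfl, hyx⟩⟩
    · exact hnone ⟨x, rfl⟩
    · rcases hx with hnone | ⟨z, hz, hxz⟩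
      · exact hnone ⟨y, hy⟩
      · exact Std.Asymm.asymm _ _ hyx (hP y z hy hz ▸ hxz)
  rw [vote, if_pos ⟨x, rfl, hx⟩, if_neg hrefuse, sub_zero]

theorem Delta_eq_neg_sum_vote [Fintype A] [Fintype B] (I : PrefSys A B) (M N : Finset (A × B)) :
    Delta I M N = -(∑ a, vote (I.prefA a) (fun b => (a, b) ∈ M) (fun b => (a, b) ∈ N) +
      ∑ b, vote (I.prefB b) (fun a => (a, b) ∈ M) (fun a => (a, b) ∈ N)) := by
  have phi_eq (M N : Finset (A × B)) : (phi I M N : ℤ) =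
      ∑ a, (if prefersA I a M N then 1 else 0) + ∑ b, (if prefersB I b M N then 1 else 0) := by
    rw [phi, Finset.card_filter, Nat.cast_sum, Fintype.sum_sum_type]
    push_cast
    rfl
  have sum_voteA : ∑ a, vote (I.prefA a) (fun b => (a, b) ∈ M) (fun b => (a, b) ∈ N) =
      ∑ a, (if prefersA I a N M then 1 else 0) - ∑ a, (if prefersA I a M N then 1 else 0) :=
    Finset.sum_sub_distrib ..
  have sum_voteB : ∑ b, vote (I.prefB b) (fun a => (a, b) ∈ M) (fun a => (a, b) ∈ N) =
      ∑ b, (if prefersB I b N M then 1 else 0) - ∑ b, (if prefersB I b M N then 1 else 0) :=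
    Finset.sum_sub_distrib ..
  rw [Delta, phi_eq, phi_eq, sum_voteA, sum_voteB]
  ring

end Votes

section Matchings

variable {I : PrefSys A B} {M : Finset (A × B)} {a a' : A} {b b' : B}

theorem IsMatching.eq_right (hM : IsMatching I M) (hb : (a, b) ∈ M) (hb' : (a, b') ∈ M) :
    b = b' :=
  congrArg Prod.snd (hM.2.1 _ hb _ hb' rfl)

theorem IsMatching.eq_left (hM : IsMatching I M) (ha : (a, b) ∈ M) (ha' : (a', b) ∈ M) :
    a = a' :=
  congrArg Prod.fst (hM.2.2 _ ha _ ha' rfl)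

theorem IsMatching.card_add_card_not_matchedB [Fintype B] (hM : IsMatching I M) :
    M.card + Fintype.card {b // ¬ matchedB M b} = Fintype.card B := by
  have hsnd : Finset.univ.filter (matchedB M) = M.image Prod.snd := by
    ext b
    simp [matchedB]
  have hcard : M.card = Fintype.card {b // matchedB M b} := by
    rw [Fintype.card_subtype, hsnd, Finset.card_image_of_injOn fun p hp q hq => hM.2.2 p hp q hq]
  rw [hcard, Fintype.card_subtype_compl]
  exact Nat.add_sub_cancel' (Fintype.card_subtype_le _)

end Matchings

section Reassign

variable {I : PrefSys A B} {M : Finset (A × B)} {a : A} {b : B}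

/-- The nodes of `A`, together with a phantom partner for every node of `B` unmatched in `M`. -/
abbrev Owner (M : Finset (A × B)) : Type _ :=
  A ⊕ {b : B // ¬ matchedB M b}

/-- The partner of `b` in `M`, which is its phantom partner if `b` is unmatched. -/
def owner (M : Finset (A × B)) (b : B) : Owner M :=
  if h : matchedB M b then Sum.inl h.choose else Sum.inr ⟨b, h⟩

theorem owner_eq_inr_iff {p : {b // ¬ matchedB M b}} : owner M b = Sum.inr p ↔ b = p := by
  constructor
  · rw [owner]
    split_ifs with h
    · simp
    · rintro hp
      rw [← Sum.inr.inj hp]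
  · rintro rfl
    exact dif_neg p.2

theorem owner_eq_inl_iff (hM : IsMatching I M) : owner M b = Sum.inl a ↔ (a, b) ∈ M := by
  constructor
  · rw [owner]
    split_ifs with h
    · rintro ha
      exact Sum.inl.inj ha ▸ h.choose_spec
    · simp
  · intro ha
    have h : matchedB M b := ⟨a, ha⟩
    rw [owner, dif_pos h, hM.eq_left h.choose_spec ha]

theorem owner_injective (hM : IsMatching I M) : Function.Injective (owner M) := by
  intro b b' h
  rcases hx : owner M b' with a | p
  · exact hM.eq_right ((owner_eq_inl_iff hM).1 (h.trans hx)) ((owner_eq_inl_iff hM).1 hx)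
  · exact (owner_eq_inr_iff.1 (h.trans hx)).trans (owner_eq_inr_iff.1 hx).symm

theorem exists_owner_eq_or_not_matchedA (hM : IsMatching I M) (y : Owner M) :
    (∃ b, owner M b = y) ∨ ∃ a, ¬ matchedA M a ∧ y = Sum.inl a := by
  rcases y with a | p
  · by_cases ha : matchedA M a
    · exact Or.inl (ha.imp fun b hb => (owner_eq_inl_iff hM).2 hb)
    · exact Or.inr ⟨a, ha, rfl⟩
  · exact Or.inl ⟨p, owner_eq_inr_iff.2 rfl⟩

/-- The owner `x` may take over the node of `B` owned by `y`, if there is one. Phantoms may take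
over every node, which leaves it unmatched. -/
def CanTake (I : PrefSys A B) (M : Finset (A × B)) (x y : Owner M) : Prop :=
  ∀ a b, x = Sum.inl a → owner M b = y → I.E a b

theorem CanTake.refl (hM : IsMatching I M) (x : Owner M) : CanTake I M x x := by
  rintro a b rfl hb
  exact hM.1 (a, b) ((owner_eq_inl_iff hM).1 hb)

theorem CanTake.inr (p : {b // ¬ matchedB M b}) (y : Owner M) : CanTake I M (Sum.inr p) y :=
  fun _ _ h => by cases h

theorem CanTake.of_not_matchedA (hM : IsMatching I M) (ha : ¬ matchedA M a) (x : Owner M) :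
    CanTake I M x (Sum.inl a) :=
  fun _ b _ hb => absurd ⟨b, (owner_eq_inl_iff hM).1 hb⟩ ha

theorem CanTake.inl_owner (hM : IsMatching I M) (hab : I.E a b) :
    CanTake I M (Sum.inl a) (owner M b) := by
  rintro _ b' ⟨⟩ hb'
  rwa [owner_injective hM hb']

variable [Fintype A] [Fintype B]

/-- The set of edges in which every `a` gets the node of `B` owned by `σ a`. -/
def reassign (M : Finset (A × B)) (σ : Equiv.Perm (Owner M)) : Finset (A × B) :=
  Finset.univ.filter fun p => owner M p.2 = σ (Sum.inl p.1)

theorem mem_reassign {σ : Equiv.Perm (Owner M)} :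
    (a, b) ∈ reassign M σ ↔ owner M b = σ (Sum.inl a) := by
  simp [reassign]

theorem isMatching_reassign (hM : IsMatching I M) {σ : Equiv.Perm (Owner M)}
    (hσ : ∀ x, CanTake I M x (σ x)) : IsMatching I (reassign M σ) := by
  refine ⟨?_, ?_, ?_⟩
  · rintro ⟨a, b⟩ h
    exact hσ _ a b rfl (mem_reassign.1 h)
  · rintro ⟨a, b⟩ h ⟨_, b'⟩ h' rfl
    rw [owner_injective hM ((mem_reassign.1 h).trans (mem_reassign.1 h').symm)]
  · rintro ⟨a, b⟩ h ⟨a', _⟩ h' rfl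
    rw [Sum.inl_injective (σ.injective ((mem_reassign.1 h).symm.trans (mem_reassign.1 h')))]

theorem exists_inr_of_not_matchedB_reassign {σ : Equiv.Perm (Owner M)}
    (hb : ¬ matchedB (reassign M σ) b) : ∃ p, owner M b = σ (Sum.inr p) := by
  rcases hx : σ.symm (owner M b) with a | p
  · exact absurd ⟨a, mem_reassign.2 (σ.symm_apply_eq.1 hx)⟩ hb
  · exact ⟨p, σ.symm_apply_eq.1 hx⟩

theorem exists_injective_not_matchedB_reassign (hM : IsMatching I M) (σ : Equiv.Perm (Owner M)) :
    ∃ f : {b // ¬ matchedB (reassign M σ) b} → {b // ¬ matchedB M b},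
      Function.Injective f ∧ ∀ b, owner M b.1 = σ (Sum.inr (f b)) := by
  choose f hf using fun b : {b // ¬ matchedB (reassign M σ) b} =>
    exists_inr_of_not_matchedB_reassign b.2
  refine ⟨f, fun b b' h => Subtype.ext (owner_injective hM ?_), hf⟩
  rw [hf, hf, h]

theorem card_le_card_reassign (hM : IsMatching I M) {σ : Equiv.Perm (Owner M)}
    (hσ : ∀ x, CanTake I M x (σ x)) : M.card ≤ (reassign M σ).card := by
  obtain ⟨f, hf, -⟩ := exists_injective_not_matchedB_reassign hM σ
  have := Fintype.card_le_of_injective f hf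
  have := hM.card_add_card_not_matchedB
  have := (isMatching_reassign hM hσ).card_add_card_not_matchedB
  omega

theorem card_lt_card_reassign (hM : IsMatching I M) {σ : Equiv.Perm (Owner M)}
    (hσ : ∀ x, CanTake I M x (σ x)) (ha : ¬ matchedA M a) {p : {b // ¬ matchedB M b}}
    (hp : σ (Sum.inr p) = Sum.inl a) : M.card < (reassign M σ).card := by
  obtain ⟨f, hf, howner⟩ := exists_injective_not_matchedB_reassign hM σ
  have hnot : p ∉ Set.range f := by
    rintro ⟨b, rfl⟩
    exact ha ⟨b, (owner_eq_inl_iff hM).1 ((howner b).trans hp)⟩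
  have := Fintype.card_lt_of_injective_of_notMem f hf hnot
  have := hM.card_add_card_not_matchedB
  have := (isMatching_reassign hM hσ).card_add_card_not_matchedB
  omega

theorem IsMaximumMatching.reassign (hM : IsMaximumMatching I M) {σ : Equiv.Perm (Owner M)}
    (hσ : ∀ x, CanTake I M x (σ x)) : IsMaximumMatching I (reassign M σ) :=
  ⟨isMatching_reassign hM.1 hσ, fun N hN => (hM.2 N hN).trans (card_le_card_reassign hM.1 hσ)⟩

end Reassign

section TakeWeight

variable [Fintype B] {I : PrefSys A B} {M : Finset (A × B)} {a : A} {b : B}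

/-- The votes cast when the owner `x` takes over the node of `B` owned by `y`: the vote of `x`
(phantoms abstain) plus the vote of the node of `B`, if there is one. -/
def takeWeight (I : PrefSys A B) (M : Finset (A × B)) (x y : Owner M) : ℤ :=
  Sum.elim (fun a => vote (I.prefA a) (fun b => (a, b) ∈ M) (fun b => owner M b = y)) 0 x +
    ∑ b with owner M b = y, vote (I.prefB b) (fun a => (a, b) ∈ M) (fun a => x = Sum.inl a)

theorem sum_takeWeight_perm [Fintype A] (I : PrefSys A B) (M : Finset (A × B))
    (σ : Equiv.Perm (Owner M)) :
    ∑ x, takeWeight I M x (σ x) = -Delta I M (reassign M σ) := by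
  have sum_voteA : ∑ x, Sum.elim (fun a => vote (I.prefA a) (fun b => (a, b) ∈ M)
        (fun b => owner M b = σ x)) 0 x =
      ∑ a, vote (I.prefA a) (fun b => (a, b) ∈ M) (fun b => (a, b) ∈ reassign M σ) := by
    simp [Fintype.sum_sum_type, mem_reassign]
  let voteB (b : B) : ℤ :=
    vote (I.prefB b) (fun a => (a, b) ∈ M) (fun a => (a, b) ∈ reassign M σ)
  have sum_voteB : ∑ x, ∑ b with owner M b = σ x,
      vote (I.prefB b) (fun a => (a, b) ∈ M) (fun a => x = Sum.inl a) = ∑ b, voteB b := by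
    calc _ = ∑ x, ∑ b with owner M b = σ x, voteB b := by
          refine Finset.sum_congr rfl fun x _ => Finset.sum_congr rfl fun b hb => ?_
          simp [voteB, mem_reassign, (Finset.mem_filter.1 hb).2]
      _ = ∑ y, ∑ b with owner M b = y, voteB b :=
          Equiv.sum_comp σ fun y => ∑ b with owner M b = y, voteB b
      _ = ∑ b, voteB b := Finset.sum_fiberwise _ _ _
  simp only [takeWeight, Finset.sum_add_distrib]
  rw [sum_voteA, sum_voteB, Delta_eq_neg_sum_vote, neg_neg]

theorem takeWeight_self (hM : IsMatching I M) (x : Owner M) : takeWeight I M x x = 0 := by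
  have hA : Sum.elim (fun a => vote (I.prefA a) (fun b => (a, b) ∈ M) (fun b => owner M b = x))
      0 x = 0 := by
    cases x <;> simp [owner_eq_inl_iff hM, vote_self]
  rw [takeWeight, hA, zero_add]
  refine Finset.sum_eq_zero fun b hb => ?_
  simp [← (Finset.mem_filter.1 hb).2, owner_eq_inl_iff hM, vote_self]

theorem takeWeight_inl_owner (hM : IsMatching I M) (a : A) (b : B) :
    takeWeight I M (Sum.inl a) (owner M b) =
      vote (I.prefA a) (fun b => (a, b) ∈ M) (· = b) +
        vote (I.prefB b) (fun a => (a, b) ∈ M) (· = a) := by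
  simp [takeWeight, (owner_injective hM).eq_iff, Finset.sum_filter, eq_comm]

theorem takeWeight_inr_owner (hM : IsMatching I M) (p : {b // ¬ matchedB M b}) (b : B) :
    takeWeight I M (Sum.inr p) (owner M b) =
      vote (I.prefB b) (fun a => (a, b) ∈ M) (fun _ => False) := by
  simp [takeWeight, (owner_injective hM).eq_iff, Finset.sum_filter]

theorem takeWeight_inl_of_not_matchedA (hM : IsMatching I M) (ha : ¬ matchedA M a)
    (x : Owner M) :
    takeWeight I M x (Sum.inl a) =
      Sum.elim (fun a' => vote (I.prefA a') (fun b => (a', b) ∈ M) (fun _ => False)) 0 x := by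
  have hfree (b : B) : (a, b) ∉ M := fun hb => ha ⟨b, hb⟩
  simp [takeWeight, owner_eq_inl_iff hM, hfree]

theorem neg_one_le_takeWeight_inr (hM : IsMatching I M) (p : {b // ¬ matchedB M b})
    (y : Owner M) : -1 ≤ takeWeight I M (Sum.inr p) y := by
  obtain ⟨b, rfl⟩ | ⟨a, ha, rfl⟩ := exists_owner_eq_or_not_matchedA hM y
  · rw [takeWeight_inr_owner hM]
    exact neg_one_le_vote ..
  · simp [takeWeight_inl_of_not_matchedA hM ha]

theorem neg_one_le_takeWeight_of_not_matchedA (hM : IsMatching I M) (ha : ¬ matchedA M a)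
    (x : Owner M) : -1 ≤ takeWeight I M x (Sum.inl a) := by
  rw [takeWeight_inl_of_not_matchedA hM ha]
  cases x with
  | inl a' => exact neg_one_le_vote ..
  | inr p => simp

theorem takeWeight_le (hM : IsMatching I M) (x y : Owner M) :
    takeWeight I M x y ≤ Sum.elim (fun _ => 2) (fun _ => 0) x := by
  obtain ⟨b, rfl⟩ | ⟨a, ha, rfl⟩ := exists_owner_eq_or_not_matchedA hM y
  · cases x with
    | inl a =>
      rw [takeWeight_inl_owner hM, Sum.elim_inl]
      linarith [vote_le_one (I.prefA a) (fun b => (a, b) ∈ M) (· = b),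
        vote_le_one (I.prefB b) (fun a => (a, b) ∈ M) (· = a)]
    | inr p =>
      rw [takeWeight_inr_owner hM]
      exact vote_nonpos_of_forall_not fun _ => id
  · rw [takeWeight_inl_of_not_matchedA hM ha]
    cases x with
    | inl a' => exact (vote_le_one ..).trans one_le_two
    | inr p => exact le_rfl

end TakeWeight

section Popular

variable {I : PrefSys A B} {M : Finset (A × B)} {x : Owner M} {l : List (Owner M)}

theorem IsMaximumMatching.getLast_ne_inr [Finite A] [Finite B] (hM : IsMaximumMatching I M)
    {a : A} (ha : ¬ matchedA M a) (hl : IsSimplePath (CanTake I M) (Sum.inl a :: l))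
    (p : {b // ¬ matchedB M b}) :
    (Sum.inl a :: l).getLast (List.cons_ne_nil _ l) ≠ Sum.inr p := by
  intro hp
  have := Fintype.ofFinite A
  have := Fintype.ofFinite B
  have hchain := hl.isChain_concat (hp ▸ CanTake.inr p (Sum.inl a))
  have hσ := rel_formPerm_of_isChain (CanTake.refl hM.1) hl.1 hchain
  have haugment : (Sum.inl a :: l).formPerm (Sum.inr p) = Sum.inl a := by
    rw [← hp, List.formPerm_apply_getLast]
  exact (card_lt_card_reassign hM.1 hσ ha haugment).not_ge (hM.2 _ (isMatching_reassign hM.1 hσ))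

variable [Fintype A] [Fintype B]

theorem IsPopularMaxMatching.sum_takeWeight_nonpos (hM : IsPopularMaxMatching I M)
    {σ : Equiv.Perm (Owner M)} (hσ : ∀ x, CanTake I M x (σ x)) :
    ∑ x, takeWeight I M x (σ x) ≤ 0 := by
  rw [sum_takeWeight_perm]
  exact neg_nonpos.2 (hM.2 _ (hM.1.reassign hσ))

theorem IsPopularMaxMatching.pathWeight_cycle_nonpos (hM : IsPopularMaxMatching I M)
    (x : Owner M) (l : List (Owner M)) (hl : (x :: l).Nodup)
    (hc : (x :: l ++ [x]).IsChain (CanTake I M)) :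
    pathWeight (takeWeight I M) (x :: l ++ [x]) ≤ 0 := by
  rw [pathWeight_cycle_eq_sum_formPerm (takeWeight_self hM.1.1) hl]
  exact hM.sum_takeWeight_nonpos (rel_formPerm_of_isChain (CanTake.refl hM.1.1) hl hc)

theorem IsPopularMaxMatching.pathWeight_le_one (hM : IsPopularMaxMatching I M)
    (hl : IsSimplePath (CanTake I M) (x :: l))
    (hclose : CanTake I M ((x :: l).getLast (List.cons_ne_nil x l)) x)
    (hweight : -1 ≤ takeWeight I M ((x :: l).getLast (List.cons_ne_nil x l)) x) :
    pathWeight (takeWeight I M) (x :: l) ≤ 1 := by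
  have hcycle := hM.pathWeight_cycle_nonpos x l hl.1 (hl.isChain_concat hclose)
  rw [pathWeight_concat (List.cons_ne_nil x l)] at hcycle
  linarith

/-- The bonus for ending a path in a phantom. It is chosen so that the potential of phantoms is
maximal, up to rounding. -/
def phantomBonus (M : Finset (A × B)) : Owner M → ℤ :=
  Sum.elim (fun _ => 0) (fun _ => 2 * Fintype.card A - 2)

theorem IsPopularMaxMatching.pathValue_le (hM : IsPopularMaxMatching I M)
    (hl : IsSimplePath (CanTake I M) (x :: l)) :
    pathValue (takeWeight I M) (phantomBonus M) x l ≤ 2 * Fintype.card A - 1 := by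
  rcases hlast : (x :: l).getLast (List.cons_ne_nil x l) with a | p
  · have hsum : ((x :: l).map (Sum.elim (fun _ => 2) fun _ => 0)).sum ≤
        2 * (Fintype.card A : ℤ) := by
      rw [← List.sum_toFinset _ hl.1]
      refine (Finset.sum_le_univ_sum_of_nonneg fun y => ?_).trans ?_
      · cases y <;> simp
      · simp [Fintype.sum_sum_type, mul_comm]
    have hpath := pathWeight_add_getLast_le (takeWeight_le hM.1.1) x l
    rw [hlast, Sum.elim_inl] at hpath
    rw [pathValue, hlast, phantomBonus, Sum.elim_inl]
    linarith
  · have hpath := hM.pathWeight_le_one hl (hlast ▸ CanTake.inr p x)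
      (hlast ▸ neg_one_le_takeWeight_inr hM.1.1 p x)
    rw [pathValue, hlast, phantomBonus, Sum.elim_inr]
    linarith

theorem IsPopularMaxMatching.pathValue_le_one (hM : IsPopularMaxMatching I M) {a : A}
    (ha : ¬ matchedA M a) (hl : IsSimplePath (CanTake I M) (Sum.inl a :: l)) :
    pathValue (takeWeight I M) (phantomBonus M) (Sum.inl a) l ≤ 1 := by
  have hpath := hM.pathWeight_le_one hl (CanTake.of_not_matchedA hM.1.1 ha _)
    (neg_one_le_takeWeight_of_not_matchedA hM.1.1 ha _)
  rcases hlast : (Sum.inl a :: l).getLast (List.cons_ne_nil _ l) with a' | p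
  · rwa [pathValue, hlast, phantomBonus, Sum.elim_inl, add_zero]
  · exact absurd hlast (hM.1.getLast_ne_inr ha hl p)

/-- A potential on the owners: along every edge `(a, b)` it drops from `a` to the owner of `b` by at
least the votes cast when `a` takes over `b`. It is as large as possible (up to rounding) on
phantoms and as small as possible on unmatched nodes of `A`. -/
structure IsPotential (I : PrefSys A B) (M : Finset (A × B)) (m : Owner M → ℤ) : Prop where
  nonneg : ∀ a, 0 ≤ m (Sum.inl a)
  le_inr : ∀ p, 2 * Fintype.card A - 2 ≤ m (Sum.inr p)
  le : ∀ x, m x ≤ 2 * Fintype.card A - 1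
  le_one : ∀ a, ¬ matchedA M a → m (Sum.inl a) ≤ 1
  vote_add_le : ∀ a b, I.E a b →
    vote (I.prefA a) (fun b => (a, b) ∈ M) (· = b) +
      vote (I.prefB b) (fun a => (a, b) ∈ M) (· = a) + m (owner M b) ≤ m (Sum.inl a)

theorem IsPopularMaxMatching.exists_isPotential (hM : IsPopularMaxMatching I M) :
    ∃ m, IsPotential I M m := by
  obtain ⟨m, hbonus, harc, hpath⟩ := exists_potential hM.pathWeight_cycle_nonpos (phantomBonus M)
  refine ⟨m, fun a => hbonus (Sum.inl a), fun p => hbonus (Sum.inr p), fun x => ?_, fun a ha => ?_,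
    fun a b hab => ?_⟩
  · obtain ⟨l, hl, hm⟩ := hpath x
    exact hm ▸ hM.pathValue_le hl
  · obtain ⟨l, hl, hm⟩ := hpath (Sum.inl a)
    exact hm ▸ hM.pathValue_le_one ha hl
  · rw [← takeWeight_inl_owner hM.1.1]
    exact harc _ _ (CanTake.inl_owner hM.1.1 hab)

end Popular

section Leveling

variable [Fintype A] {I : PrefSys A B} {M : Finset (A × B)} {m : Owner M → ℤ}

/-- Level functions `α` on `A` and `β` on `B` certifying that `M` lifts to a stable matching in
`G*`: if `a` has level `i`, the lift matches the copy `a_i` to `M(a)`. -/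
structure IsLeveling (I : PrefSys A B) (M : Finset (A × B)) (α : A → ℕ) (β : B → ℕ) : Prop where
  lt_card : ∀ a, α a < Fintype.card A
  eq_of_mem : ∀ a b, (a, b) ∈ M → α a = β b
  succ_eq_card : ∀ a, ¬ matchedA M a → α a + 1 = Fintype.card A
  eq_zero : ∀ b, ¬ matchedB M b → β b = 0
  le_succ : ∀ a b, I.E a b → α a ≤ β b + 1
  le_of_improves : ∀ a b, I.E a b →
    Improves (I.prefA a) (fun b => (a, b) ∈ M) b ∨ Improves (I.prefB b) (fun a => (a, b) ∈ M) a →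
      α a ≤ β b
  lt_of_improves : ∀ a b, I.E a b → Improves (I.prefA a) (fun b => (a, b) ∈ M) b →
    Improves (I.prefB b) (fun a => (a, b) ∈ M) a → α a < β b

/-- The level belonging to the potential `m x`. The subtraction is truncated at `0`. -/
def level {M : Finset (A × B)} (m : Owner M → ℤ) (x : Owner M) : ℕ :=
  (Fintype.card A - 1 - m x / 2).toNat

theorem IsPotential.level_inl_lt_card (hm : IsPotential I M m) (a : A) :
    level m (Sum.inl a) < Fintype.card A := by
  have := Fintype.card_pos_iff.2 ⟨a⟩
  have := hm.nonneg a
  rw [level]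
  omega

theorem IsPotential.level_inl_add_one (hm : IsPotential I M m) {a : A}
    (ha : ¬ matchedA M a) : level m (Sum.inl a) + 1 = Fintype.card A := by
  have := Fintype.card_pos_iff.2 ⟨a⟩
  have := hm.nonneg a
  have := hm.le_one a ha
  rw [level]
  omega

theorem IsPotential.level_inr (hm : IsPotential I M m)
    (p : {b // ¬ matchedB M b}) : level m (Sum.inr p) = 0 := by
  have := hm.le_inr p
  rw [level]
  omega

theorem IsPotential.isLeveling (hm : IsPotential I M m)
    (hA : ∀ a, Std.Asymm (I.prefA a)) (hB : ∀ b, Std.Asymm (I.prefB b)) (hM : IsMatching I M) :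
    IsLeveling I M (fun a => level m (Sum.inl a)) (fun b => level m (owner M b)) := by
  have voteA_ge (a b) := neg_one_le_vote (I.prefA a) (fun b => (a, b) ∈ M) (· = b)
  have voteB_ge (a b) := neg_one_le_vote (I.prefB b) (fun a => (a, b) ∈ M) (· = a)
  have voteA_eq_one (a b) := vote_eq_one_of_improves (r := I.prefA a) (x := b)
    fun c d (hc : (a, c) ∈ M) (hd : (a, d) ∈ M) => hM.eq_right hc hd
  have voteB_eq_one (a b) := vote_eq_one_of_improves (r := I.prefB b) (x := a)
    fun c d (hc : (c, b) ∈ M) (hd : (d, b) ∈ M) => hM.eq_left hc hd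
  refine ⟨hm.level_inl_lt_card, fun a b hab => ?_, fun a => hm.level_inl_add_one, fun b hb => ?_,
    fun a b hab => ?_, fun a b hab himproves => ?_, fun a b hab ha hb => ?_⟩
  · rw [(owner_eq_inl_iff hM).2 hab]
  · rw [(owner_eq_inr_iff (p := ⟨b, hb⟩)).2 rfl]
    exact hm.level_inr _
  · have := hm.vote_add_le a b hab
    have := hm.le (owner M b)
    have := voteA_ge a b
    have := voteB_ge a b
    simp only [level]
    omega
  · have := himproves.imp (voteA_eq_one a b) (voteB_eq_one a b)
    have := hm.vote_add_le a b hab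
    have := voteA_ge a b
    have := voteB_ge a b
    simp only [level]
    omega
  · have := hm.vote_add_le a b hab
    have := hm.le (Sum.inl a)
    have := voteA_eq_one a b ha
    have := voteB_eq_one a b hb
    simp only [level]
    omega

end Leveling

section Lift

variable [Fintype A] [Fintype B] {I : PrefSys A B} {M : Finset (A × B)} {α : A → ℕ} {β : B → ℕ}
  {a a' : A} {b : B} {i : Fin (Fintype.card A)} {j : Fin (Fintype.card A - 1)}

/-- The matching in `G*` that matches, for every `a`, the copy of `a` of subscript `α a` as in `M`,
the copies of smaller subscript `i` to `d_{i+1}(a)` and those of larger subscript `i` to `d_i(a)`.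
Recall that `(a, j)` stands for `d_{j+1}(a)`. -/
def liftMatching (M : Finset (A × B)) (α : A → ℕ) : Finset (AStar A × BStar A B) :=
  Finset.univ.filter fun p =>
    match p with
    | ((a, i), Sum.inl b) => (a, b) ∈ M ∧ (i : ℕ) = α a
    | ((a, i), Sum.inr (a', j)) =>
        a = a' ∧ ((i : ℕ) = j ∧ (i : ℕ) < α a ∨ (i : ℕ) = j + 1 ∧ α a < i)

theorem mem_liftMatching_inl :
    ((a, i), Sum.inl b) ∈ liftMatching M α ↔ (a, b) ∈ M ∧ (i : ℕ) = α a := by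
  simp [liftMatching]

theorem mem_liftMatching_inr :
    ((a, i), (Sum.inr (a', j) : BStar A B)) ∈ liftMatching M α ↔
      a = a' ∧ ((i : ℕ) = j ∧ (i : ℕ) < α a ∨ (i : ℕ) = j + 1 ∧ α a < i) := by
  simp [liftMatching]

theorem exists_mem_liftMatching_of_lt (M : Finset (A × B)) (h : α a < i) :
    ∃ j : Fin (Fintype.card A - 1),
      (j : ℕ) + 1 = i ∧ ((a, i), Sum.inr (a, j)) ∈ liftMatching M α :=
  ⟨⟨i - 1, by omega⟩, by simp only; omega, mem_liftMatching_inr.2 ⟨rfl, by simp only; omega⟩⟩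

theorem proj_liftMatching (hα : ∀ a, α a < Fintype.card A) : proj (liftMatching M α) = M := by
  ext ⟨a, b⟩
  simp only [proj, Finset.mem_filter, Finset.mem_univ, true_and, mem_liftMatching_inl]
  exact ⟨fun ⟨_, h, _⟩ => h, fun h => ⟨⟨α a, hα a⟩, h, rfl⟩⟩

theorem isMatching_liftMatching (hM : IsMatching I M) :
    IsMatching (starSys I) (liftMatching M α) := by
  refine ⟨?_, ?_, ?_⟩
  · rintro ⟨⟨a, i⟩, b | ⟨a', j⟩⟩ h
    · exact hM.1 _ (mem_liftMatching_inl.1 h).1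
    · obtain ⟨rfl, hij⟩ := mem_liftMatching_inr.1 h
      exact ⟨rfl, hij.imp And.left And.left⟩
  · rintro ⟨⟨a, i⟩, b | ⟨_, j⟩⟩ h ⟨_, b' | ⟨_, j'⟩⟩ h' rfl <;>
      simp only [mem_liftMatching_inl, mem_liftMatching_inr] at h h'
    · rw [hM.eq_right h.1 h'.1]
    · omega
    · omega
    · obtain ⟨rfl, h⟩ := h
      obtain ⟨rfl, h'⟩ := h'
      rw [show j = j' by omega]
  · rintro ⟨⟨a, i⟩, b | ⟨_, j⟩⟩ h ⟨⟨a', i'⟩, _⟩ h' rfl <;>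
      simp only [mem_liftMatching_inl, mem_liftMatching_inr] at h h'
    · obtain rfl := hM.eq_left h.1 h'.1
      rw [show i = i' by omega]
    · obtain ⟨rfl, h⟩ := h
      obtain ⟨rfl, h'⟩ := h'
      rw [show i = i' by omega]

theorem Blocks.lt_or_improvesA
    (h : Blocks (starSys I) (liftMatching M α) (a, i) (Sum.inl b)) :
    (i : ℕ) < α a ∨ (i : ℕ) = α a ∧ Improves (I.prefA a) (fun b => (a, b) ∈ M) b := by
  obtain ⟨-, -, himproves, -⟩ := h
  rcases lt_trichotomy (i : ℕ) (α a) with hi | hi | hi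
  · exact Or.inl hi
  · refine Or.inr ⟨hi, ?_⟩
    rcases himproves with hfree | ⟨b' | ⟨a', j⟩, hmem, hpref⟩
    · exact Or.inl fun ⟨c, hc⟩ => hfree ⟨Sum.inl c, mem_liftMatching_inl.2 ⟨hc, hi⟩⟩
    · exact Or.inr ⟨b', (mem_liftMatching_inl.1 hmem).1, hpref⟩
    · have := (mem_liftMatching_inr.1 hmem).2
      omega
  · obtain ⟨j, hj, hdummy⟩ := exists_mem_liftMatching_of_lt M hi
    rcases himproves with hfree | ⟨b' | ⟨a', j'⟩, hmem, hpref⟩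
    · exact absurd ⟨_, hdummy⟩ hfree
    · have := (mem_liftMatching_inl.1 hmem).2
      omega
    · have := (mem_liftMatching_inr.1 hmem).2
      have : (j' : ℕ) = i := hpref.2
      omega

theorem Blocks.lt_or_improvesB (hα : IsLeveling I M α β)
    (h : Blocks (starSys I) (liftMatching M α) (a, i) (Sum.inl b)) :
    β b < i ∨ (i : ℕ) = β b ∧ Improves (I.prefB b) (fun a => (a, b) ∈ M) a := by
  obtain ⟨-, -, -, hfree | ⟨⟨a', i'⟩, hmem, hpref⟩⟩ := h
  · have hb : ¬ matchedB M b := fun ⟨a', ha'⟩ =>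
      hfree ⟨(a', ⟨α a', hα.lt_card a'⟩), mem_liftMatching_inl.2 ⟨ha', rfl⟩⟩
    rw [hα.eq_zero b hb]
    exact (Nat.eq_zero_or_pos i).symm.imp_right fun hi => ⟨hi, Or.inl hb⟩
  · obtain ⟨ha', hi'⟩ := mem_liftMatching_inl.1 hmem
    rw [← hα.eq_of_mem a' b ha', ← hi']
    exact hpref.imp_right fun ⟨hi, hpref⟩ => ⟨hi, Or.inr ⟨a', ha', hpref⟩⟩

theorem IsLeveling.not_blocks_inl (hα : IsLeveling I M α β) :
    ¬ Blocks (starSys I) (liftMatching M α) (a, i) (Sum.inl b) := by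
  intro h
  have hab : I.E a b := h.1
  rcases h.lt_or_improvesA with ha | ⟨ha, himpA⟩ <;>
    rcases h.lt_or_improvesB hα with hb | ⟨hb, himpB⟩
  · have := hα.le_succ a b hab
    omega
  · have := hα.le_of_improves a b hab (Or.inr himpB)
    omega
  · have := hα.le_of_improves a b hab (Or.inl himpA)
    omega
  · have := hα.lt_of_improves a b hab himpA himpB
    omega

theorem IsLeveling.exists_mem_liftMatching_of_le (hα : IsLeveling I M α β) (hle : α a ≤ i)
    (hi : (i : ℕ) + 1 < Fintype.card A) : ∃ v, ((a, i), v) ∈ liftMatching M α := by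
  rcases hle.eq_or_lt with heq | hlt
  · have hmatched : matchedA M a := by
      by_contra ha
      have := hα.succ_eq_card a ha
      omega
    exact hmatched.elim fun b hb => ⟨Sum.inl b, mem_liftMatching_inl.2 ⟨hb, heq.symm⟩⟩
  · exact (exists_mem_liftMatching_of_lt M hlt).imp' _ fun _ h => h.2

theorem IsLeveling.not_blocks_inr (hα : IsLeveling I M α β) :
    ¬ Blocks (starSys I) (liftMatching M α) (a, i) (Sum.inr (a', j)) := by
  rintro ⟨⟨rfl, hij | hij⟩, hnot, hA, hB⟩ <;>
    simp only [mem_liftMatching_inr, true_and] at hnot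
  -- `d_{i+1}(a)` is the last choice of `a_i`.
  · rcases hA with hfree | ⟨b | ⟨a', j'⟩, -, hpref⟩
    · exact hfree (hα.exists_mem_liftMatching_of_le (by omega) (by omega))
    · have : (j : ℕ) + 1 = i := hpref.2
      omega
    · have : (j : ℕ) + 1 = i := hpref.2.2.1
      omega
  -- `a_i` is the last choice of `d_i(a)`.
  · rcases hB with hfree | ⟨⟨a', i'⟩, -, hpref⟩
    · have hj : (j : ℕ) < α a := by omega
      exact hfree ⟨(a, ⟨j, by omega⟩), mem_liftMatching_inr.2 ⟨rfl, Or.inl ⟨rfl, hj⟩⟩⟩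
    · have : (i : ℕ) = j := hpref.2.2.1
      omega

theorem IsLeveling.isStable_liftMatching (hα : IsLeveling I M α β) (hM : IsMatching I M) :
    IsStable (starSys I) (liftMatching M α) := by
  refine ⟨isMatching_liftMatching hM, ?_⟩
  rintro ⟨a, i⟩ (b | ⟨a', j⟩)
  · exact hα.not_blocks_inl
  · exact hα.not_blocks_inr

end Lift

theorem stmt14_general {A B : Type*} [Fintype A] [Fintype B] (I : PrefSys A B)
    (hA : ∀ a, Std.Asymm (I.prefA a)) (hB : ∀ b, Std.Asymm (I.prefB b)) (M : Finset (A × B))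
    (hM : IsPopularMaxMatching I M) :
    ∃ S : Finset (AStar A × BStar A B), IsStable (starSys I) S ∧ proj S = M := by
  obtain ⟨m, hm⟩ := hM.exists_isPotential
  have hlevel := hm.isLeveling hA hB hM.1.1
  exact ⟨liftMatching M _, hlevel.isStable_liftMatching hM.1.1, proj_liftMatching hlevel.lt_card⟩

/-- Every popular max-matching `M` in `G` is the image of a stable
matching in `G*`: there is a stable matching `S` in `G*` with `S' = M`. -/
theorem stmt14 {A B : Type*} [Fintype A] [Fintype B] [DecidableEq A] [DecidableEq B]
    (I : PrefSys A B) (hI : I.IsValid) (M : Finset (A × B))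
    (hM : IsPopularMaxMatching I M) :
    ∃ S : Finset (AStar A × BStar A B), IsStable (starSys I) S ∧ proj S = M :=
  stmt14_general I (fun a => ⟨fun b c hbc hcb => hI.1 a b (hI.2.1 a b c b hbc hcb)⟩)
    (fun b => ⟨fun a c hac hca => hI.2.2.2.1 b a (hI.2.2.2.2.1 b a c a hac hca)⟩) M hM

end PopMax
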